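/- In the Golub–Kahan bidiagonalization setup, fix k with 1 ≤ k ≤ n−1 and let (θ̃_1^{(k)})² > (θ̃_2^{(k)})² > ⋯ > (θ̃_k^{(k)})² be the singular values of the (k+1)×k matrix M_k obtained by stacking the row α_{k+1}β_{k+1}(e_k^{(k)})ᵀ below B_kᵀB_k, where e_k^{(k)} is the last standard basis vector of ℝ^k. Let θ_1^{(k)} > ⋯ > θ_k^{(k)} be the singular values of B_k. Then for every i with 1 ≤ i ≤ k one has θ_i^{(k)} < θ̃_i^{(k)} < σ_i. -/

import Mathlib

open Matrix

/-- Spectral norm (largest singular value) of a real matrix. -/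
noncomputable def specNorm {a b : ℕ} (M : Matrix (Fin a) (Fin b) ℝ) : ℝ :=
  ‖LinearMap.toContinuousLinearMap (Matrix.toEuclideanLin M)‖

/-- The `j`-th largest singular value of a real matrix (`j ≥ 1`), characterized via the
Eckart–Young theorem as the minimal spectral-norm distance to matrices of rank `< j`;
it is `0` when `j` exceeds the smaller dimension. -/
noncomputable def singVal {a b : ℕ} (M : Matrix (Fin a) (Fin b) ℝ) (j : ℕ) : ℝ :=
  sInf {r : ℝ | ∃ D : Matrix (Fin a) (Fin b) ℝ, D.rank < j ∧ r = specNorm (M - D)}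

/-- The matrix of the first `k` columns of `M`. -/
def colSub {a b : ℕ} (M : Matrix (Fin a) (Fin b) ℝ) (k : ℕ) (hk : k ≤ b) :
    Matrix (Fin a) (Fin k) ℝ :=
  M.submatrix id fun j => ⟨j.1, lt_of_lt_of_le j.2 hk⟩

/-- The leading `r × c` submatrix of `M`. -/
def subUL {a b : ℕ} (M : Matrix (Fin a) (Fin b) ℝ) (r c : ℕ) (hr : r ≤ a) (hc : c ≤ b) :
    Matrix (Fin r) (Fin c) ℝ :=
  M.submatrix (fun i => ⟨i.1, lt_of_lt_of_le i.2 hr⟩) (fun j => ⟨j.1, lt_of_lt_of_le j.2 hc⟩)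


lemma nsq {b : ℕ} (x : Fin b → ℝ) : ‖WithLp.toLp 2 x‖ ^ 2 = x ⬝ᵥ x := by
  rw [EuclideanSpace.norm_sq_eq]
  simp [dotProduct, pow_two]

lemma specNorm_le' {a b : ℕ} (M : Matrix (Fin a) (Fin b) ℝ) (c : ℝ) (hc : 0 ≤ c)
    (h : ∀ x : Fin b → ℝ, (M *ᵥ x) ⬝ᵥ (M *ᵥ x) ≤ c ^ 2 * (x ⬝ᵥ x)) : specNorm M ≤ c := by
  refine ContinuousLinearMap.opNorm_le_bound _ hc fun x => ?_
  have h1 := h x.ofLp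
  rw [← nsq, ← nsq, ← mul_pow] at h1
  exact (pow_le_pow_iff_left₀ (norm_nonneg _) (by positivity) two_ne_zero).1 h1

lemma le_specNorm {a b : ℕ} (M : Matrix (Fin a) (Fin b) ℝ) (x : Fin b → ℝ) :
    (M *ᵥ x) ⬝ᵥ (M *ᵥ x) ≤ specNorm M ^ 2 * (x ⬝ᵥ x) := by
  rw [← nsq, ← nsq, ← mul_pow]
  exact pow_le_pow_left₀ (norm_nonneg _)
    ((LinearMap.toContinuousLinearMap (Matrix.toEuclideanLin M)).le_opNorm (WithLp.toLp 2 x)) 2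

lemma specNorm_nonneg {a b : ℕ} (M : Matrix (Fin a) (Fin b) ℝ) : 0 ≤ specNorm M := norm_nonneg _

lemma singVal_bdd {a b : ℕ} (M : Matrix (Fin a) (Fin b) ℝ) (j : ℕ) :
    BddBelow {r : ℝ | ∃ D : Matrix (Fin a) (Fin b) ℝ, D.rank < j ∧ r = specNorm (M - D)} :=
  ⟨0, by rintro r ⟨D, -, rfl⟩; exact specNorm_nonneg _⟩

lemma singVal_nonneg {a b : ℕ} (M : Matrix (Fin a) (Fin b) ℝ) (j : ℕ) : 0 ≤ singVal M j :=
  Real.sInf_nonneg (by rintro r ⟨D, -, rfl⟩; exact specNorm_nonneg _)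

lemma diag_exists {a b : ℕ} (M : Matrix (Fin a) (Fin b) ℝ) :
    ∃ (c : (Fin b → ℝ) ≃ₗ[ℝ] (Fin b → ℝ)) (l : Fin b → ℝ), Antitone l ∧ (∀ i, 0 ≤ l i) ∧
      (∀ x, x ⬝ᵥ x = ∑ i, c x i ^ 2) ∧
      (∀ x, (M *ᵥ x) ⬝ᵥ (M *ᵥ x) = ∑ i, l i * c x i ^ 2) ∧
      (∀ x i, c ((Mᵀ * M) *ᵥ x) i = l i * c x i) := by
  classical
  set L := Matrix.toEuclideanLin M with hL
  have hs := L.isSymmetric_adjoint_comp_self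
  have hp := L.isPositive_adjoint_comp_self
  have hd : Module.finrank ℝ (EuclideanSpace ℝ (Fin b)) = b := by simp
  set v := hs.eigenvectorBasis hd
  let e := WithLp.linearEquiv 2 ℝ (Fin b → ℝ)
  have hG : ∀ x : Fin b → ℝ, WithLp.toLp 2 ((Mᵀ * M) *ᵥ x)
      = (LinearMap.adjoint L ∘ₗ L) (WithLp.toLp 2 x) := by
    intro x
    rw [hL, ← Matrix.toEuclideanLin_conjTranspose_eq_adjoint]
    simp [Matrix.toLpLin_apply]
  have h3 : ∀ x : Fin b → ℝ, x ⬝ᵥ x = ∑ i, (v.repr (WithLp.toLp 2 x)) i ^ 2 := by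
    intro x
    rw [← nsq, ← v.repr.norm_map, EuclideanSpace.norm_sq_eq]
    simp
  have h5 : ∀ (x : Fin b → ℝ) i, v.repr (WithLp.toLp 2 ((Mᵀ * M) *ᵥ x)) i
      = hs.eigenvalues hd i * v.repr (WithLp.toLp 2 x) i := by
    intro x i
    rw [hG]
    exact hs.eigenvectorBasis_apply_self_apply hd _ i
  refine ⟨(e.symm.trans v.repr.toLinearEquiv).trans e, hs.eigenvalues hd,
    hs.eigenvalues_antitone hd, hp.nonneg_eigenvalues hd, h3, ?_, h5⟩
  intro x
  have h6 : (M *ᵥ x) ⬝ᵥ (M *ᵥ x)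
      = inner ℝ (WithLp.toLp 2 x) (WithLp.toLp 2 ((Mᵀ * M) *ᵥ x)) := by
    rw [EuclideanSpace.inner_eq_star_dotProduct]
    simp only [star_trivial]
    rw [← Matrix.mulVec_mulVec, Matrix.mulVec_transpose, ← Matrix.dotProduct_mulVec]
  rw [h6, ← v.repr.inner_map_map, PiLp.inner_apply]
  refine Finset.sum_congr rfl fun i _ => ?_
  rw [h5]
  simp [e]
  ring

lemma exists_coord {b : ℕ} (c : (Fin b → ℝ) ≃ₗ[ℝ] (Fin b → ℝ)) (p : Fin b → Prop)
    [DecidablePred p] :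
    ∃ S : Submodule ℝ (Fin b → ℝ), Module.finrank ℝ S = Fintype.card {j // p j} ∧
      ∀ x ∈ S, ∀ j, ¬ p j → c x j = 0 := by
  let f : ({j // p j} → ℝ) →ₗ[ℝ] (Fin b → ℝ) :=
    { toFun := fun y j => if h : p j then y ⟨j, h⟩ else 0
      map_add' := by intro y z; ext j; by_cases h : p j <;> simp [h]
      map_smul' := by intro r y; ext j; by_cases h : p j <;> simp [h] }
  have hf : Function.Injective f := by
    intro y z h
    ext ⟨j, hj⟩
    have := congrFun h j
    simpa [f, hj] using this
  refine ⟨LinearMap.range (c.symm.toLinearMap ∘ₗ f), ?_, ?_⟩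
  · rw [LinearMap.finrank_range_of_inj (by
      rw [LinearMap.coe_comp]; exact c.symm.injective.comp hf)]
    simp
  · rintro _ ⟨y, rfl⟩ j hj
    simp [f, hj]

lemma exists_inter {b : ℕ} (S W : Submodule ℝ (Fin b → ℝ))
    (h : b < Module.finrank ℝ S + Module.finrank ℝ W) : ∃ x, x ∈ S ∧ x ∈ W ∧ x ≠ 0 := by
  have h1 := Submodule.finrank_sup_add_finrank_inf_eq S W
  have h2 := (S ⊔ W).finrank_le
  rw [Module.finrank_fin_fun] at h2
  have h3 : S ⊓ W ≠ ⊥ := by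
    intro h0
    rw [h0, finrank_bot] at h1
    omega
  obtain ⟨x, hx, hx0⟩ := Submodule.exists_mem_ne_zero_of_ne_bot h3
  exact ⟨x, hx.1, hx.2, hx0⟩

lemma card_le' {b : ℕ} (i : Fin b) : Fintype.card {j : Fin b // j ≤ i} = i + 1 := by
  rw [Fintype.card_subtype]
  have : (Finset.univ.filter fun j : Fin b => j ≤ i) = Finset.Iic i := by ext; simp
  rw [this, Fin.card_Iic]

lemma card_ge' {b : ℕ} (i : Fin b) : Fintype.card {j : Fin b // i ≤ j} = b - i := by
  rw [Fintype.card_subtype]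
  have : (Finset.univ.filter fun j : Fin b => i ≤ j) = Finset.Ici i := by ext; simp
  rw [this, Fin.card_Ici]

lemma card_lt' {b : ℕ} (i : Fin b) : Fintype.card {j : Fin b // j < i} = i := by
  rw [Fintype.card_subtype]
  have : (Finset.univ.filter fun j : Fin b => j < i) = Finset.Iio i := by ext; simp
  rw [this, Fin.card_Iio]

lemma singVal_eq {a b : ℕ} (M : Matrix (Fin a) (Fin b) ℝ)
    (c : (Fin b → ℝ) ≃ₗ[ℝ] (Fin b → ℝ)) (l : Fin b → ℝ) (hl : Antitone l) (hl0 : ∀ i, 0 ≤ l i)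
    (h1 : ∀ x, x ⬝ᵥ x = ∑ i, c x i ^ 2)
    (h2 : ∀ x, (M *ᵥ x) ⬝ᵥ (M *ᵥ x) = ∑ i, l i * c x i ^ 2) (i : Fin b) :
    singVal M (i + 1) = √(l i) := by
  have hlow : ∀ D : Matrix (Fin a) (Fin b) ℝ, D.rank < i + 1 → √(l i) ≤ specNorm (M - D) := by
    intro D hD
    obtain ⟨S, hS, hSc⟩ := exists_coord c (fun j => j ≤ i)
    rw [card_le'] at hS
    have hr := (Matrix.mulVecLin D).finrank_range_add_finrank_ker
    rw [Module.finrank_fin_fun] at hr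
    rw [Matrix.rank] at hD
    obtain ⟨x, hxS, hxK, hx0⟩ := exists_inter S (LinearMap.ker (Matrix.mulVecLin D)) (by omega)
    have hD0 : D *ᵥ x = 0 := hxK
    have h3 := le_specNorm (M - D) x
    rw [Matrix.sub_mulVec, hD0, sub_zero] at h3
    have hpos : 0 < x ⬝ᵥ x := by
      have : 0 ≤ x ⬝ᵥ x := by rw [h1]; positivity
      refine lt_of_le_of_ne this fun h => hx0 (dotProduct_self_eq_zero.1 h.symm)
    have h4 : l i * (x ⬝ᵥ x) ≤ (M *ᵥ x) ⬝ᵥ (M *ᵥ x) := by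
      rw [h1, h2, Finset.mul_sum]
      refine Finset.sum_le_sum fun j _ => ?_
      by_cases hj : j ≤ i
      · exact mul_le_mul_of_nonneg_right (hl hj) (sq_nonneg _)
      · simp [hSc x hxS j hj]
    have h5 : l i ≤ specNorm (M - D) ^ 2 := le_of_mul_le_mul_right (h4.trans h3) hpos
    exact Real.sqrt_le_iff.2 ⟨specNorm_nonneg _, h5⟩
  apply le_antisymm
  · let g : (Fin b → ℝ) →ₗ[ℝ] ({j // j < i} → ℝ) := LinearMap.funLeft ℝ ℝ Subtype.val ∘ₗ c.toLinearMap
    let f : ({j // j < i} → ℝ) →ₗ[ℝ] (Fin b → ℝ) :=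
      { toFun := fun y j => if h : j < i then y ⟨j, h⟩ else 0
        map_add' := by intro y z; ext j; by_cases h : j < i <;> simp [h]
        map_smul' := by intro r y; ext j; by_cases h : j < i <;> simp [h] }
    let F := Matrix.mulVecLin M ∘ₗ c.symm.toLinearMap ∘ₗ f
    let D : Matrix (Fin a) (Fin b) ℝ := LinearMap.toMatrix' (F ∘ₗ g)
    have hDv : ∀ x, D *ᵥ x = M *ᵥ (c.symm (f (g x))) := by
      intro x
      rw [LinearMap.toMatrix'_mulVec]; rfl
    refine csInf_le_of_le (singVal_bdd M _) ⟨D, ?_, rfl⟩ ?_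
    · have e1 : Matrix.mulVecLin D = F ∘ₗ g := by
        refine LinearMap.ext fun x => ?_
        exact LinearMap.toMatrix'_mulVec (F ∘ₗ g) x
      rw [Matrix.rank, e1]
      have e2 := Submodule.finrank_mono (LinearMap.range_comp_le_range g F)
      have e3 := LinearMap.finrank_range_le F
      rw [Module.finrank_fintype_fun_eq_card, card_lt'] at e3
      omega
    · refine specNorm_le' _ _ (Real.sqrt_nonneg _) fun x => ?_
      rw [Real.sq_sqrt (hl0 i), Matrix.sub_mulVec, hDv, ← Matrix.mulVec_sub, h2, h1, Finset.mul_sum]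
      refine Finset.sum_le_sum fun j _ => ?_
      rw [map_sub, LinearEquiv.apply_symm_apply, Pi.sub_apply]
      by_cases hj : j < i
      · have : f (g x) j = c x j := by simp [f, g, hj, LinearMap.funLeft_apply]
        rw [this]
        have := hl0 i
        simp
        positivity
      · have : f (g x) j = 0 := by simp [f, hj]
        rw [this, sub_zero]
        exact mul_le_mul_of_nonneg_right (hl (not_lt.1 hj)) (sq_nonneg _)
  · refine le_csInf ⟨_, 0, by simp, rfl⟩ ?_
    rintro r ⟨D, hD, rfl⟩
    exact hlow D hD

lemma key {a b : ℕ} (M : Matrix (Fin a) (Fin b) ℝ) (i : Fin b) (s : ℝ)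
    (hs : s = singVal M (i + 1)) :
    ∃ S W : Submodule ℝ (Fin b → ℝ), Module.finrank ℝ S = i + 1 ∧ Module.finrank ℝ W = b - i ∧
      (∀ x ∈ S, s ^ 2 * (x ⬝ᵥ x) ≤ (M *ᵥ x) ⬝ᵥ (M *ᵥ x) ∧
        ((Mᵀ * M) *ᵥ x - s ^ 2 • x) ⬝ᵥ ((Mᵀ * M) *ᵥ x - s ^ 2 • x) ≤
          ((Mᵀ * M) *ᵥ x) ⬝ᵥ ((Mᵀ * M) *ᵥ x) - s ^ 4 * (x ⬝ᵥ x)) ∧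
      (∀ x ∈ W, (M *ᵥ x) ⬝ᵥ (M *ᵥ x) ≤ s ^ 2 * (x ⬝ᵥ x) ∧
        ((Mᵀ * M) *ᵥ x - s ^ 2 • x) ⬝ᵥ ((Mᵀ * M) *ᵥ x - s ^ 2 • x) ≤
          s ^ 4 * (x ⬝ᵥ x) - ((Mᵀ * M) *ᵥ x) ⬝ᵥ ((Mᵀ * M) *ᵥ x)) := by
  obtain ⟨c, l, hl, hl0, h1, h2, h3⟩ := diag_exists M
  have hsl : s ^ 2 = l i := by
    rw [hs, singVal_eq M c l hl hl0 h1 h2 i, Real.sq_sqrt (hl0 i)]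
  have hs4 : s ^ 4 = l i ^ 2 := by rw [← hsl]; ring
  obtain ⟨S, hS, hSc⟩ := exists_coord c (fun j => j ≤ i)
  obtain ⟨W, hW, hWc⟩ := exists_coord c (fun j => i ≤ j)
  rw [card_le'] at hS
  rw [card_ge'] at hW
  refine ⟨S, W, hS, hW, fun x hx => ?_, fun x hx => ?_⟩
  · rw [hsl, hs4, h2, h1, h1, h1, Finset.mul_sum, Finset.mul_sum, ← Finset.sum_sub_distrib]
    refine ⟨Finset.sum_le_sum fun j _ => ?_, Finset.sum_le_sum fun j _ => ?_⟩
    · by_cases hj : j ≤ i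
      · exact mul_le_mul_of_nonneg_right (hl hj) (sq_nonneg _)
      · simp [hSc x hx j hj]
    · rw [map_sub, map_smul, Pi.sub_apply, h3, Pi.smul_apply, smul_eq_mul]
      by_cases hj : j ≤ i
      · have := mul_nonneg (mul_nonneg (hl0 i) (sub_nonneg.2 (hl hj))) (sq_nonneg (c x j))
        nlinarith
      · simp [hSc x hx j hj]
  · rw [hsl, hs4, h2, h1, h1, h1, Finset.mul_sum, Finset.mul_sum, ← Finset.sum_sub_distrib]
    refine ⟨Finset.sum_le_sum fun j _ => ?_, Finset.sum_le_sum fun j _ => ?_⟩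
    · by_cases hj : i ≤ j
      · exact mul_le_mul_of_nonneg_right (hl hj) (sq_nonneg _)
      · simp [hWc x hx j hj]
    · rw [map_sub, map_smul, Pi.sub_apply, h3, Pi.smul_apply, smul_eq_mul]
      by_cases hj : i ≤ j
      · have := mul_nonneg (mul_nonneg (hl0 j) (sub_nonneg.2 (hl hj))) (sq_nonneg (c x j))
        nlinarith
      · simp [hWc x hx j hj]

lemma dot_nonneg {b : ℕ} (x : Fin b → ℝ) : 0 ≤ x ⬝ᵥ x := by
  rw [← nsq]; positivity

lemma dot_iso {a b : ℕ} (P : Matrix (Fin a) (Fin b) ℝ) (hP : Pᵀ * P = 1) (z : Fin b → ℝ) :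
    (P *ᵥ z) ⬝ᵥ (P *ᵥ z) = z ⬝ᵥ z := by
  rw [Matrix.dotProduct_mulVec, ← Matrix.mulVec_transpose, Matrix.mulVec_mulVec, hP,
    Matrix.one_mulVec]

lemma dot_coiso {a b : ℕ} (P : Matrix (Fin a) (Fin b) ℝ) (hP : Pᵀ * P = 1) (y : Fin a → ℝ) :
    (Pᵀ *ᵥ y) ⬝ᵥ (Pᵀ *ᵥ y) ≤ y ⬝ᵥ y := by
  have h := dot_nonneg (y - P *ᵥ (Pᵀ *ᵥ y))
  have h1 := dot_iso P hP (Pᵀ *ᵥ y)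
  have h2 : y ⬝ᵥ (P *ᵥ (Pᵀ *ᵥ y)) = (Pᵀ *ᵥ y) ⬝ᵥ (Pᵀ *ᵥ y) := by
    rw [Matrix.dotProduct_mulVec, ← Matrix.mulVec_transpose]
  rw [sub_dotProduct, dotProduct_sub, dotProduct_sub, h1,
    dotProduct_comm (P *ᵥ (Pᵀ *ᵥ y)) y, h2] at h
  linarith

lemma singVal_le_of {m n r : ℕ} (A : Matrix (Fin m) (Fin n) ℝ)
    (P : Matrix (Fin m) (Fin r) ℝ) (hP : Pᵀ * P = 1)
    (Q : Matrix (Fin n) (Fin n) ℝ) (hQ : Qᵀ * Q = 1) (B : Matrix (Fin r) (Fin n) ℝ)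
    (hA : A = P * B * Qᵀ) (j : ℕ) (hj : 0 < j) : singVal B j ≤ singVal A j := by
  refine le_csInf ⟨_, 0, by simpa using hj, rfl⟩ ?_
  rintro _ ⟨D, hD, rfl⟩
  refine csInf_le_of_le (singVal_bdd B j) ⟨Pᵀ * D * Q, ?_, rfl⟩ ?_
  · exact lt_of_le_of_lt ((Matrix.rank_mul_le_left _ _).trans (Matrix.rank_mul_le_right _ _)) hD
  · have e : B - Pᵀ * D * Q = Pᵀ * (A - D) * Q := by
      have : Pᵀ * A * Q = B := by
        rw [hA]
        calc Pᵀ * (P * B * Qᵀ) * Q = (Pᵀ * P) * B * (Qᵀ * Q) := by simp only [Matrix.mul_assoc]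
          _ = B := by rw [hP, hQ]; simp
      rw [Matrix.mul_sub, Matrix.sub_mul, this]
    rw [e]
    refine specNorm_le' _ _ (specNorm_nonneg _) fun x => ?_
    rw [← Matrix.mulVec_mulVec, ← Matrix.mulVec_mulVec]
    refine (dot_coiso P hP _).trans ((le_specNorm _ _).trans ?_)
    rw [dot_iso Q hQ]

def Bidiag {n : ℕ} (C : Matrix (Fin (n + 1)) (Fin n) ℝ) (α β : Fin n → ℝ) : Prop :=
  ∀ (i : Fin (n + 1)) (j : Fin n),
      C i j = if (i : ℕ) = (j : ℕ) then α j
        else if (i : ℕ) = (j : ℕ) + 1 then β j else 0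

lemma gram {n : ℕ} (C : Matrix (Fin (n + 1)) (Fin n) ℝ) (α β : Fin n → ℝ) (hC : Bidiag C α β)
    (i j : Fin n) : (Cᵀ * C) i j = if (i : ℕ) = j then α i ^ 2 + β i ^ 2 else
      if (i : ℕ) = j + 1 then α i * β j else if (j : ℕ) = i + 1 then α j * β i else 0 := by
  have h : ∀ l, C l i = (if l = Fin.castSucc i then α i else 0)
      + (if l = Fin.succ i then β i else 0) := by
    intro l
    rw [hC]
    simp only [Fin.ext_iff, Fin.val_castSucc, Fin.val_succ]
    split_ifs <;> first | omega | simp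
  rw [Matrix.mul_apply]
  simp only [Matrix.transpose_apply, h, add_mul, Finset.sum_add_distrib, ite_mul, zero_mul,
    Finset.sum_ite_eq', Finset.sum_ite_eq, Finset.mem_univ, if_true]
  rw [hC, hC]
  simp only [Fin.val_castSucc, Fin.val_succ]
  by_cases hij : (i : ℕ) = j
  · have : i = j := Fin.ext hij
    subst this
    simp [pow_two]
  · split_ifs <;> first | omega | ring

lemma tri {n : ℕ} (G : Matrix (Fin n) (Fin n) ℝ) (h0 : ∀ p j : Fin n, (j : ℕ) + 1 < p → G p j = 0)
    (h1 : ∀ p j : Fin n, (p : ℕ) = j + 1 → G p j ≠ 0) (μ : ℝ) (x : Fin n → ℝ)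
    (hx : G *ᵥ x = μ • x) (hl : ∀ j : Fin n, (j : ℕ) + 1 = n → x j = 0) : x = 0 := by
  have H : ∀ d : ℕ, ∀ j : Fin n, n ≤ j + 1 + d → x j = 0 := by
    intro d
    induction d with
    | zero => intro j hj; exact hl j (by omega)
    | succ d ih =>
      intro j hj
      by_cases hj' : n ≤ j + 1 + d
      · exact ih j hj'
      have hp : (j : ℕ) + 1 < n := by
        by_contra hh
        exact hj' (by omega)
      let p : Fin n := ⟨j + 1, hp⟩
      have hxp := congrFun hx p
      rw [Pi.smul_apply, ih p (by simp only [p]; omega), smul_zero, Matrix.mulVec, dotProduct,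
        Finset.sum_eq_single j] at hxp
      · exact (mul_eq_zero.1 hxp).resolve_left (h1 p j rfl)
      · intro q _ hq
        have hq' : (q : ℕ) ≠ j := fun h => hq (Fin.ext h)
        by_cases hqj : (q : ℕ) < j
        · rw [h0 p q (by simp only [p]; omega), zero_mul]
        · rw [ih q (by omega), mul_zero]
      · simp
  ext j
  exact H n j (by omega)

lemma bidiag_eig {n : ℕ} (C : Matrix (Fin (n + 1)) (Fin n) ℝ) (α β : Fin n → ℝ)
    (hC : Bidiag C α β) (hα : ∀ i, 0 < α i) (hβ : ∀ i, 0 < β i) (μ : ℝ) (x : Fin n → ℝ)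
    (hx : (Cᵀ * C) *ᵥ x = μ • x) (hl : ∀ j : Fin n, (j : ℕ) + 1 = n → x j = 0) : x = 0 := by
  refine tri _ ?_ ?_ μ x hx hl
  · intro p j h
    rw [gram C α β hC, if_neg (by omega), if_neg (by omega), if_neg (by omega)]
  · intro p j h
    rw [gram C α β hC, if_neg (by omega), if_pos h]
    exact (mul_pos (hα _) (hβ _)).ne'

lemma sum_castLE_le {k n : ℕ} (h : k ≤ n) (f : Fin n → ℝ) (hf : ∀ i, 0 ≤ f i) :
    ∑ i : Fin k, f (Fin.castLE h i) ≤ ∑ i, f i := by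
  obtain ⟨t, rfl⟩ := Nat.exists_eq_add_of_le h
  rw [Fin.sum_univ_add]
  exact le_add_of_nonneg_right (Finset.sum_nonneg fun i _ => hf _)

lemma sum_castLE_eq {k n : ℕ} (h : k ≤ n) (f : Fin n → ℝ) (hf : ∀ i : Fin n, k ≤ i → f i = 0) :
    ∑ i, f i = ∑ i : Fin k, f (Fin.castLE h i) := by
  obtain ⟨t, rfl⟩ := Nat.exists_eq_add_of_le h
  rw [Fin.sum_univ_add, Finset.sum_eq_zero (s := Finset.univ)
    (f := fun i => f (Fin.natAdd k i)), add_zero]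
  · rfl
  · intro i _
    exact hf _ (by simp)

def padL (k n : ℕ) : (Fin k → ℝ) →ₗ[ℝ] (Fin n → ℝ) where
  toFun := fun y j => if h : (j : ℕ) < k then y ⟨j, h⟩ else 0
  map_add' := by intro y z; ext j; by_cases h : (j : ℕ) < k <;> simp [h]
  map_smul' := by intro r y; ext j; by_cases h : (j : ℕ) < k <;> simp [h]

lemma padL_castLE {k n : ℕ} (h : k ≤ n) (x : Fin k → ℝ) (i : Fin k) :
    padL k n x (Fin.castLE h i) = x i := by
  simp [padL]

lemma padL_ge {k n : ℕ} (x : Fin k → ℝ) (i : Fin n) (hi : k ≤ i) : padL k n x i = 0 := by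
  simp [padL, hi]

lemma dot_padL {k n : ℕ} (h : k ≤ n) (f : Fin n → ℝ) (x : Fin k → ℝ) :
    f ⬝ᵥ padL k n x = ∑ i : Fin k, f (Fin.castLE h i) * x i := by
  rw [dotProduct, sum_castLE_eq h]
  · simp [padL_castLE]
  · intro i hi
    rw [padL_ge x i hi, mul_zero]

lemma claim1 {k : ℕ} (C Mk : Matrix (Fin (k + 1)) (Fin k) ℝ) (α β : Fin k → ℝ)
    (hC : Bidiag C α β) (hα : ∀ i, 0 < α i) (hβ : ∀ i, 0 < β i) (γ : ℝ) (hγ : 0 < γ)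
    (h1 : ∀ i j, Mk (Fin.castSucc i) j = (Cᵀ * C) i j)
    (h2 : ∀ j : Fin k, Mk (Fin.last k) j = if (j : ℕ) + 1 = k then γ else 0) (i : Fin k) :
    singVal C (i + 1) ^ 2 < singVal Mk (i + 1) := by
  by_contra hcon
  rw [not_lt] at hcon
  obtain ⟨S, -, hS, -, hSx, -⟩ := key C i _ rfl
  obtain ⟨-, W, -, hW, -, hWx⟩ := key Mk i _ rfl
  obtain ⟨x, hxS, hxW, hx0⟩ := exists_inter S W (by omega)
  have e1 := (hSx x hxS).2
  have e2 := (hWx x hxW).1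
  set θ := singVal C (i + 1)
  set τ := singVal Mk (i + 1)
  have hτ : 0 ≤ τ := singVal_nonneg _ _
  let last : Fin k := ⟨k - 1, by omega⟩
  have hlast : (Mk *ᵥ x) (Fin.last k) = γ * x last := by
    rw [Matrix.mulVec, dotProduct, Finset.sum_eq_single last]
    · rw [h2, if_pos (by simp only [last]; omega)]
    · intro j _ hj
      have : (j : ℕ) ≠ k - 1 := fun h => hj (Fin.ext h)
      rw [h2, if_neg (by omega), zero_mul]
    · simp
  have e3 : (Mk *ᵥ x) ⬝ᵥ (Mk *ᵥ x) =
      ((Cᵀ * C) *ᵥ x) ⬝ᵥ ((Cᵀ * C) *ᵥ x) + (γ * x last) ^ 2 := by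
    rw [dotProduct, Fin.sum_univ_castSucc, hlast, pow_two, dotProduct]
    congr 1
    refine Finset.sum_congr rfl fun r _ => ?_
    have : (Mk *ᵥ x) (Fin.castSucc r) = ((Cᵀ * C) *ᵥ x) r := by
      simp only [Matrix.mulVec, dotProduct, h1]
    rw [this]
  have e4 : τ ^ 2 * (x ⬝ᵥ x) ≤ θ ^ 4 * (x ⬝ᵥ x) := by
    refine mul_le_mul_of_nonneg_right ?_ (dot_nonneg x)
    calc τ ^ 2 ≤ (θ ^ 2) ^ 2 := pow_le_pow_left₀ hτ hcon 2
      _ = θ ^ 4 := by ring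
  have e5 := dot_nonneg ((Cᵀ * C) *ᵥ x - θ ^ 2 • x)
  have e6 := sq_nonneg (γ * x last)
  have e7 : ((Cᵀ * C) *ᵥ x - θ ^ 2 • x) ⬝ᵥ ((Cᵀ * C) *ᵥ x - θ ^ 2 • x) = 0 := by linarith
  have e8 : (γ * x last) ^ 2 = 0 := by linarith
  have e9 : x last = 0 := (mul_eq_zero.1 (pow_eq_zero_iff two_ne_zero |>.1 e8)).resolve_left hγ.ne'
  refine hx0 (bidiag_eig C α β hC hα hβ (θ ^ 2) x (sub_eq_zero.1 (dotProduct_self_eq_zero.1 e7)) ?_)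
  intro j hj
  have : j = last := Fin.ext (by simp only [last]; omega)
  rw [this, e9]

lemma claim2 {n k : ℕ} (hk : k + 1 ≤ n) (B : Matrix (Fin (n + 1)) (Fin n) ℝ) (α β : Fin n → ℝ)
    (hC : Bidiag B α β) (hα : ∀ i, 0 < α i) (hβ : ∀ i, 0 < β i)
    (Mk : Matrix (Fin (k + 1)) (Fin k) ℝ)
    (h1 : ∀ r j, Mk r j = (Bᵀ * B) (Fin.castLE hk r) (Fin.castLE (by omega) j)) (i : Fin k) :
    singVal Mk (i + 1) < singVal B (i + 1) ^ 2 := by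
  by_contra hcon
  rw [not_lt] at hcon
  have hkn : k ≤ n := by omega
  obtain ⟨S, -, hS, -, hSx, -⟩ := key Mk i _ rfl
  obtain ⟨-, W, -, hW, -, hWx⟩ := key B (Fin.castLE hkn i) _ rfl
  have hinj : Function.Injective (padL k n) := by
    intro y z h
    ext j
    rw [← padL_castLE hkn y j, h, padL_castLE]
  have hS' : Module.finrank ℝ (S.map (padL k n)) = i + 1 := by
    rw [← hS]
    exact (Submodule.equivMapOfInjective _ hinj S).symm.finrank_eq
  rw [Fin.val_castLE] at hW hWx
  obtain ⟨_, ⟨x, hxS, rfl⟩, hxW, hx0⟩ := exists_inter (S.map (padL k n)) W (by omega)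
  have e1 := (hSx x hxS).1
  have e2 := (hWx _ hxW).2
  set σ := singVal B (i + 1)
  set τ := singVal Mk (i + 1)
  have e3 : padL k n x ⬝ᵥ padL k n x = x ⬝ᵥ x := by
    rw [dot_padL hkn]; simp [padL_castLE, dotProduct]
  have e4 : (Mk *ᵥ x) ⬝ᵥ (Mk *ᵥ x) ≤
      ((Bᵀ * B) *ᵥ padL k n x) ⬝ᵥ ((Bᵀ * B) *ᵥ padL k n x) := by
    refine le_trans (le_of_eq ?_) (sum_castLE_le hk _ fun i => mul_self_nonneg _)
    refine Finset.sum_congr rfl fun r _ => ?_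
    have : (Mk *ᵥ x) r = ((Bᵀ * B) *ᵥ padL k n x) (Fin.castLE hk r) := by
      rw [Matrix.mulVec, Matrix.mulVec, dot_padL hkn, dotProduct]
      simp only [h1]
    rw [this]
  have e5 : σ ^ 4 * (x ⬝ᵥ x) ≤ τ ^ 2 * (x ⬝ᵥ x) := by
    refine mul_le_mul_of_nonneg_right ?_ (dot_nonneg x)
    calc σ ^ 4 = (σ ^ 2) ^ 2 := by ring
      _ ≤ τ ^ 2 := pow_le_pow_left₀ (sq_nonneg _) hcon 2
  have e6 := dot_nonneg ((Bᵀ * B) *ᵥ padL k n x - σ ^ 2 • padL k n x)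
  rw [e3] at e2
  have e7 : ((Bᵀ * B) *ᵥ padL k n x - σ ^ 2 • padL k n x) ⬝ᵥ
      ((Bᵀ * B) *ᵥ padL k n x - σ ^ 2 • padL k n x) = 0 := by linarith
  refine hx0 (bidiag_eig B α β hC hα hβ (σ ^ 2) _ (sub_eq_zero.1 (dotProduct_self_eq_zero.1 e7)) ?_)
  intro j hj
  exact padL_ge x j (by omega)

/-- the square roots `θ̃_i^{(k)}` of the singular values of the `(k+1) × k`
matrix `M_k = (B_kᵀB_k; α_{k+1}β_{k+1}(e_k)ᵀ)` satisfy `θ_i^{(k)} < θ̃_i^{(k)} < σ_i`. -/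
theorem lsmr_singularValues_between_lsqr_and_A
    (m n : ℕ) (hn : 2 ≤ n) (hmn : n < m)
    (A : Matrix (Fin m) (Fin n) ℝ)
    (P : Matrix (Fin m) (Fin (n + 1)) ℝ) (hP : Pᵀ * P = 1)
    (Q : Matrix (Fin n) (Fin n) ℝ) (hQ : Qᵀ * Q = 1)
    (α : Fin n → ℝ) (hα : ∀ i, 0 < α i)
    (β : Fin n → ℝ) (hβ : ∀ i, 0 < β i)
    (B : Matrix (Fin (n + 1)) (Fin n) ℝ)
    (hB : ∀ (i : Fin (n + 1)) (j : Fin n),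
      B i j = if (i : ℕ) = (j : ℕ) then α j
        else if (i : ℕ) = (j : ℕ) + 1 then β j else 0)
    (hA : A = P * B * Qᵀ)
    (σ : Fin n → ℝ) (hσpos : ∀ i, 0 < σ i)
    (hσstrict : ∀ i j : Fin n, i < j → σ j < σ i)
    (hσ : ∀ i : Fin n, σ i = singVal A ((i : ℕ) + 1))
    (k : ℕ) (hk1 : 1 ≤ k) (hk2 : k ≤ n - 1)
    (Mk : Matrix (Fin (k + 1)) (Fin k) ℝ)
    (hMk : ∀ (i : Fin (k + 1)) (j : Fin k),
      Mk i j = if h : (i : ℕ) < k then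
          ((subUL B (k + 1) k (by omega) (by omega))ᵀ *
            subUL B (k + 1) k (by omega) (by omega)) ⟨(i : ℕ), h⟩ j
        else if (j : ℕ) = k - 1 then
          B ⟨k, by omega⟩ ⟨k, by omega⟩ * B ⟨k, by omega⟩ ⟨k - 1, by omega⟩
        else 0)
    :
    ∀ i : Fin k,
      singVal (subUL B (k + 1) k (by omega) (by omega)) ((i : ℕ) + 1) <
          Real.sqrt (singVal Mk ((i : ℕ) + 1)) ∧
        Real.sqrt (singVal Mk ((i : ℕ) + 1)) < σ ⟨(i : ℕ), by have := i.2; omega⟩ := by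
  intro i
  have hkn : k + 1 ≤ n := by omega
  have hkn' : k ≤ n := by omega
  have hik := i.2
  set C := subUL B (k + 1) k (by omega) (by omega) with hCdef
  let α' : Fin k → ℝ := fun j => α (Fin.castLE hkn' j)
  let β' : Fin k → ℝ := fun j => β (Fin.castLE hkn' j)
  have hBB : Bidiag B α β := hB
  have hCB : Bidiag C α' β' := by
    intro r j
    exact hB ⟨r, by omega⟩ ⟨j, by omega⟩
  have hα' : ∀ j, 0 < α' j := fun j => hα _
  have hβ' : ∀ j, 0 < β' j := fun j => hβ _
  have hb1 : B ⟨k, by omega⟩ ⟨k, by omega⟩ = α ⟨k, by omega⟩ := by rw [hB]; simp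
  have hb2 : B ⟨k, by omega⟩ ⟨k - 1, by omega⟩ = β ⟨k - 1, by omega⟩ := by
    rw [hB, if_neg (by simp only; omega), if_pos (by simp only; omega)]
  have hM1 : ∀ r j, Mk (Fin.castSucc r) j = (Cᵀ * C) r j := by
    intro r j
    rw [hMk, dif_pos (by simp)]
    rfl
  have hM2 : ∀ j : Fin k, Mk (Fin.last k) j =
      if (j : ℕ) + 1 = k then α ⟨k, by omega⟩ * β ⟨k - 1, by omega⟩ else 0 := by
    intro j
    rw [hMk, dif_neg (by simp), hb1, hb2]
    have hj := j.2
    by_cases h : (j : ℕ) + 1 = k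
    · rw [if_pos h, if_pos (by omega)]
    · rw [if_neg h, if_neg (by omega)]
  have hM3 : ∀ r j, Mk r j = (Bᵀ * B) (Fin.castLE hkn r) (Fin.castLE hkn' j) := by
    intro r j
    have hj := j.2
    refine Fin.lastCases ?_ (fun r => ?_) r
    · rw [hM2, gram B α β hBB]
      simp only [Fin.val_castLE, Fin.val_last]
      rw [if_neg (by omega : ¬ k = (j : ℕ))]
      by_cases h : (j : ℕ) + 1 = k
      · rw [if_pos h, if_pos h.symm]
        congr 2
        exact Fin.ext (by simp only [Fin.val_castLE]; omega)
      · rw [if_neg h, if_neg (by omega), if_neg (by omega)]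
    · rw [hM1, gram B α β hBB, gram C α' β' hCB]
      rfl
  have c1 := claim1 C Mk α' β' hCB hα' hβ' _ (mul_pos (hα _) (hβ _)) hM1 hM2 i
  have c2 := claim2 hkn B α β hBB hα hβ Mk hM3 i
  have c3 := singVal_le_of A P hP Q hQ B hA ((i : ℕ) + 1) (by omega)
  refine ⟨Real.lt_sqrt_of_sq_lt c1, (Real.sqrt_lt' (hσpos _)).2 (lt_of_lt_of_le c2 ?_)⟩
  rw [hσ]
  exact pow_le_pow_left₀ (singVal_nonneg _ _) c3 2
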